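/- arXiv:0809.0086 — 3 statements merged into one kernel-verified Lean document; each statement's English description precedes it below -/
import Mathlib

section
/- Let R be a commutative ring, n a positive integer, and A = (a_{ij}) an invertible symmetric n×n matrix over R with inverse (a^{ij}). Define D_i on R[x_1,…,x_n] by D_i(g) = Σ_j a^{ij} ∂g/∂x_j + x_i·g. Then D_1,…,D_n form a regular sequence of commuting operators on R[x_1,…,x_n]: for each 0 ≤ s < n, the operator induced by D_{s+1} on the quotient R[x_1,…,x_n] / (D_1(R[x_1,…,x_n]) + ⋯ + D_s(R[x_1,…,x_n])) is injective; equivalently, if D_{s+1}(g) ∈ D_1(R[x]) + ⋯ + D_s(R[x]) then g ∈ D_1(R[x]) + ⋯ + D_s(R[x]). -/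
open MvPolynomial

noncomputable section

/-- The operator `D_i(g) = Σ_j a^{ij} ∂g/∂x_j + x_i·g` on `R[x_1,…,x_n]`,
where `B = (a^{ij})` is the inverse matrix of `A`. -/
def Dop {n : ℕ} {R : Type*} [CommRing R] (B : Matrix (Fin n) (Fin n) R)
    (i : Fin n) (g : MvPolynomial (Fin n) R) : MvPolynomial (Fin n) R :=
  (∑ j, C (B i j) * pderiv j g) + X i * g

/-- The `R`-submodule `D_1(R[x]) + ⋯ + D_s(R[x])` of `R[x_1,…,x_n]` generated by
the images of the operators `D_i` for `i < s` (indices `0,…,s-1` of `Fin n`). -/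
def DopSpan {n : ℕ} {R : Type*} [CommRing R] (B : Matrix (Fin n) (Fin n) R)
    (s : ℕ) : Submodule R (MvPolynomial (Fin n) R) :=
  Submodule.span R
    {p | ∃ (i : Fin n) (g : MvPolynomial (Fin n) R), (i : ℕ) < s ∧ p = Dop B i g}

/-- derivation part -/
def dl {n : ℕ} {R : Type*} [CommRing R] (B : Matrix (Fin n) (Fin n) R)
    (i : Fin n) : Derivation R (MvPolynomial (Fin n) R) (MvPolynomial (Fin n) R) :=
  ∑ j, B i j • pderiv j

lemma dl_apply {n : ℕ} {R : Type*} [CommRing R] (B : Matrix (Fin n) (Fin n) R)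
    (i : Fin n) (g : MvPolynomial (Fin n) R) :
    dl B i g = ∑ j, C (B i j) * pderiv j g := by
  have h : dl B i g = ∑ j, (B i j • pderiv j : Derivation R (MvPolynomial (Fin n) R) _) g := by
    unfold dl
    rw [← Derivation.coeFnAddMonoidHom_apply, map_sum, Finset.sum_apply]
    rfl
  rw [h]
  simp [MvPolynomial.smul_eq_C_mul]

lemma Dop_eq {n : ℕ} {R : Type*} [CommRing R] (B : Matrix (Fin n) (Fin n) R)
    (i : Fin n) (g : MvPolynomial (Fin n) R) : Dop B i g = dl B i g + X i * g := by
  rw [dl_apply, Dop]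

lemma dl_X {n : ℕ} {R : Type*} [CommRing R] (B : Matrix (Fin n) (Fin n) R)
    (i j : Fin n) : dl B i (X j) = C (B i j) := by
  rw [dl_apply, Finset.sum_eq_single j]
  · simp
  · intro k _ hk
    simp [pderiv_X_of_ne hk.symm]
  · simp

lemma dl_X_mul {n : ℕ} {R : Type*} [CommRing R] (B : Matrix (Fin n) (Fin n) R)
    (i j : Fin n) (g : MvPolynomial (Fin n) R) :
    dl B i (X j * g) = X j * dl B i g + C (B i j) * g := by
  rw [Derivation.leibniz, dl_X]
  simp [mul_comm]

lemma dl_comm {n : ℕ} {R : Type*} [CommRing R] (B B' : Matrix (Fin n) (Fin n) R)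
    (i j : Fin n) (g : MvPolynomial (Fin n) R) : dl B i (dl B' j g) = dl B' j (dl B i g) := by
  induction g using MvPolynomial.induction_on with
  | C a => simp [← MvPolynomial.algebraMap_eq]
  | add p q hp hq => simp [hp, hq]
  | mul_X p k h =>
    rw [mul_comm, dl_X_mul, dl_X_mul, map_add, map_add, dl_X_mul, dl_X_mul, h]
    simp only [← MvPolynomial.smul_eq_C_mul, Derivation.map_smul]
    abel

lemma Dop_comm {n : ℕ} {R : Type*} [CommRing R] (B : Matrix (Fin n) (Fin n) R)
    (hB : ∀ i j, B i j = B j i)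
    (i j : Fin n) (g : MvPolynomial (Fin n) R) : Dop B i (Dop B j g) = Dop B j (Dop B i g) := by
  simp only [Dop_eq, map_add, dl_X_mul]
  rw [dl_comm B B i j g, hB i j]
  ring

/-- `Dop` as a linear map -/
def DL {n : ℕ} {R : Type*} [CommRing R] (B : Matrix (Fin n) (Fin n) R)
    (i : Fin n) : Module.End R (MvPolynomial (Fin n) R) :=
  (dl B i).toLinearMap + LinearMap.mulLeft R (X i)

lemma DL_apply {n : ℕ} {R : Type*} [CommRing R] (B : Matrix (Fin n) (Fin n) R)
    (i : Fin n) (g : MvPolynomial (Fin n) R) : DL B i g = Dop B i g := by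
  rw [Dop_eq]; rfl

lemma exists_Phi {n : ℕ} {R : Type*} [CommRing R] (B : Matrix (Fin n) (Fin n) R)
    (hB : ∀ i j, B i j = B j i) :
    ∃ F : MvPolynomial (Fin n) R →ₗ[R] MvPolynomial (Fin n) R,
      F 1 = 1 ∧ ∀ i p, F (X i * p) = Dop B i (F p) := by
  have hc : ∀ a ∈ Set.range (DL B), ∀ b ∈ Set.range (DL B), a * b = b * a := by
    rintro _ ⟨i, rfl⟩ _ ⟨j, rfl⟩
    apply LinearMap.ext
    intro g
    simp only [LinearMap.comp_apply, Module.End.mul_apply, DL_apply]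
    exact Dop_comm B hB i j _
  letI : CommRing (Algebra.adjoin R (Set.range (DL B))) :=
    Algebra.adjoinCommRingOfComm R hc
  let f : MvPolynomial (Fin n) R →ₐ[R] Algebra.adjoin R (Set.range (DL B)) :=
    aeval (fun i => ⟨DL B i, Algebra.subset_adjoin ⟨i, rfl⟩⟩)
  have hf : ∀ i, ((f (X i) : Algebra.adjoin R (Set.range (DL B))) :
      Module.End R (MvPolynomial (Fin n) R)) = DL B i := by
    intro i
    simp [f]
  refine ⟨(LinearMap.applyₗ (1 : MvPolynomial (Fin n) R)).comp
    ((Algebra.adjoin R (Set.range (DL B))).val.toLinearMap.comp f.toLinearMap), ?_, ?_⟩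
  · simp
  · intro i p
    rw [← DL_apply, ← hf]
    simp only [LinearMap.comp_apply, AlgHom.toLinearMap_apply, map_mul]
    rfl

lemma Phi_dl {n : ℕ} {R : Type*} [CommRing R] (B B' : Matrix (Fin n) (Fin n) R)
    (F : MvPolynomial (Fin n) R →ₗ[R] MvPolynomial (Fin n) R)
    (h1 : F 1 = 1) (hX : ∀ i p, F (X i * p) = Dop B i (F p))
    (i : Fin n) (g : MvPolynomial (Fin n) R) : F (dl B' i g) = dl B' i (F g) := by
  induction g using MvPolynomial.induction_on with
  | C a =>
    have : (C a : MvPolynomial (Fin n) R) = a • 1 := by rw [smul_eq_C_mul, mul_one]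
    rw [this, Derivation.map_smul, map_smul, map_smul, h1, Derivation.map_smul]
    simp
  | add p q hp hq => simp [hp, hq]
  | mul_X p k h =>
    rw [mul_comm, dl_X_mul, hX, map_add, hX, h, ← smul_eq_C_mul, map_smul, Dop_eq, Dop_eq,
      map_add, dl_X_mul, dl_comm B B', smul_eq_C_mul]
    ring

lemma Phi_Dop {n : ℕ} {R : Type*} [CommRing R] (B : Matrix (Fin n) (Fin n) R)
    (F : MvPolynomial (Fin n) R →ₗ[R] MvPolynomial (Fin n) R)
    (h1 : F 1 = 1) (hX : ∀ i p, F (X i * p) = Dop B i (F p))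
    (i : Fin n) (g : MvPolynomial (Fin n) R) : F (Dop (-B) i g) = X i * F g := by
  have hneg : dl (-B) i (F g) = - dl B i (F g) := by simp [dl_apply]
  rw [Dop_eq, map_add, hX, Phi_dl B (-B) F h1 hX, Dop_eq, hneg]
  ring

/-- Let `A` be an invertible symmetric `n×n` matrix over a
commutative ring `R` with inverse `B = (a^{ij})` and
`D_i(g) = Σ_j a^{ij} ∂g/∂x_j + x_i·g`.  Then `D_1,…,D_n` form a regular
sequence of commuting operators on `R[x_1,…,x_n]`: they pairwise commute, and
for every `0 ≤ s < n` the operator induced by `D_{s+1}` on the quotient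
`R[x_1,…,x_n]/(D_1(R[x]) + ⋯ + D_s(R[x]))` is injective, i.e. if
`D_{s+1}(g) ∈ D_1(R[x]) + ⋯ + D_s(R[x])` then `g ∈ D_1(R[x]) + ⋯ + D_s(R[x])`. -/
theorem twisted_operators_regular_sequence {R : Type*} [CommRing R] {n : ℕ}
    (hn : 0 < n) (A B : Matrix (Fin n) (Fin n) R) (hsymm : A.IsSymm)
    (hAB : A * B = 1) (hBA : B * A = 1) :
    (∀ (i j : Fin n) (g : MvPolynomial (Fin n) R),
      Dop B i (Dop B j g) = Dop B j (Dop B i g)) ∧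
    (∀ (s : ℕ) (hs : s < n) (g : MvPolynomial (Fin n) R),
      Dop B ⟨s, hs⟩ g ∈ DopSpan B s → g ∈ DopSpan B s) := by
  have hBT : B.transpose = B := by
    have h : B.transpose * A = 1 := by
      have := congrArg Matrix.transpose hAB
      rwa [Matrix.transpose_mul, hsymm.eq, Matrix.transpose_one] at this
    calc B.transpose = B.transpose * (A * B) := by rw [hAB, mul_one]
      _ = B := by rw [← mul_assoc, h, one_mul]
  have hB : ∀ i j, B i j = B j i := fun i j => by
    conv_lhs => rw [← hBT]
    rfl
  refine ⟨Dop_comm B hB, ?_⟩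
  intro s hs g hg
  obtain ⟨F, F1, FX⟩ := exists_Phi B hB
  obtain ⟨G, G1, GX⟩ := exists_Phi (-B) (fun i j => by simp [hB i j])
  have GD : ∀ i p, G (Dop B i p) = X i * G p := by
    intro i p
    have := Phi_Dop (-B) G G1 GX i p
    rwa [neg_neg] at this
  have FG : ∀ p, F (G p) = p := by
    intro p
    induction p using MvPolynomial.induction_on with
    | C a =>
      have : (C a : MvPolynomial (Fin n) R) = a • 1 := by rw [smul_eq_C_mul, mul_one]
      rw [this, map_smul, map_smul, G1, F1]
    | add p q hp hq => rw [map_add, map_add, hp, hq]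
    | mul_X p k h => rw [mul_comm, GX, Phi_Dop B F F1 FX, h]
  set I : Ideal (MvPolynomial (Fin n) R) :=
    Ideal.span (X '' {i : Fin n | (i : ℕ) < s}) with hI
  have hGI : ∀ p ∈ DopSpan B s, G p ∈ I := by
    intro p hp
    unfold DopSpan at hp
    induction hp using Submodule.span_induction with
    | mem x hx =>
      obtain ⟨i, q, hi, rfl⟩ := hx
      rw [GD]
      exact I.mul_mem_right _ (Ideal.subset_span ⟨i, hi, rfl⟩)
    | zero => simp
    | add x y _ _ hx hy => rw [map_add]; exact I.add_mem hx hy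
    | smul a x _ hx =>
      rw [map_smul, smul_eq_C_mul]; exact I.mul_mem_left _ hx
  have hFI : ∀ p ∈ I, F p ∈ DopSpan B s := by
    intro p hp
    rw [hI] at hp
    refine Submodule.span_induction (p := fun p _ => ∀ q, F (q * p) ∈ DopSpan B s)
      ?_ ?_ ?_ ?_ hp 1 |> fun h => by simpa using h
    · rintro _ ⟨i, hi, rfl⟩ q
      rw [mul_comm, FX]
      exact Submodule.subset_span ⟨i, _, hi, rfl⟩
    · intro q
      simp
    · intro x y _ _ hx hy q
      rw [mul_add, map_add]
      exact Submodule.add_mem _ (hx q) (hy q)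
    · intro a x _ hx q
      rw [smul_eq_mul, ← mul_assoc]
      exact hx _
  have h1 := hGI _ hg
  rw [GD] at h1
  have h2 : G g ∈ I := by
    rw [hI, mem_ideal_span_X_image] at h1 ⊢
    intro m hm
    obtain ⟨i, hi, hmi⟩ := h1 (m + Finsupp.single ⟨s, hs⟩ 1) (by
      rw [mem_support_iff] at hm ⊢
      rwa [add_comm, coeff_X_mul])
    refine ⟨i, hi, ?_⟩
    have : (⟨s, hs⟩ : Fin n) ≠ i := by
      rintro rfl
      simp at hi
    simpa [Finsupp.single_apply, this] using hmi
  have := hFI _ h2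
  rwa [FG] at this


end
end

section
/- Let R be a commutative ring, n, N positive integers, A an invertible symmetric n×n matrix over R, and V ∈ R[x_1,…,x_n] an arbitrary polynomial. Set R_N = R[λ]/(λ^N), and consider on R_N^n the twisted de Rham complex with differential d_f ω = dω + (Σ_{a,b} A_{ab} x_b dx_a + λ dV)∧ω, corresponding to the perturbed function f = ½xᵗAx + λV. Then the cohomology H^k_f(R_N) vanishes for k ≠ n, and H^n_f(R_N) is isomorphic to R_N ≅ R[λ]/(λ^N), generated by the class of dx_1∧⋯∧dx_n. -/
open MvPolynomial

noncomputable section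

/-- Polynomial differential forms on `K^n`: a form assigns to each subset
`s ⊆ {1,…,n}` (the indices of `dx_{i_1} ∧ ⋯ ∧ dx_{i_k}` with `i_1 < ⋯ < i_k`)
a polynomial coefficient. -/
abbrev Form (n : ℕ) (K : Type*) [CommRing K] :=
  Finset (Fin n) → MvPolynomial (Fin n) K

/-- The sign `(-1)^{#{j ∈ s | j < i}}`. -/
def sgn {n : ℕ} (K : Type*) [CommRing K] (s : Finset (Fin n)) (i : Fin n) :
    MvPolynomial (Fin n) K :=
  (-1) ^ (s.filter (fun j => j < i)).card

/-- The twisted de Rham differential `d_α ω = dω + α ∧ ω` associated to a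
(closed) polynomial 1-form `α = Σ_i α_i dx_i`. -/
def dTwist {n : ℕ} {K : Type*} [CommRing K]
    (α : Fin n → MvPolynomial (Fin n) K) :
    Form n K →ₗ[K] Form n K where
  toFun ω := fun s => ∑ i ∈ s,
    sgn K s i * (pderiv i (ω (s.erase i)) + α i * ω (s.erase i))
  map_add' ω₁ ω₂ := by
    funext s
    simp only [Pi.add_apply]
    rw [← Finset.sum_add_distrib]
    refine Finset.sum_congr rfl fun i _ => ?_
    simp only [map_add]
    ring
  map_smul' c ω := by
    funext s
    simp only [Pi.smul_apply, map_smul, RingHom.id_apply, Finset.smul_sum]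
    refine Finset.sum_congr rfl fun i _ => ?_
    simp [mul_add, mul_smul_comm, smul_add, mul_assoc]

/-- The (untwisted) polynomial de Rham differential. -/
abbrev dRham (n : ℕ) (K : Type*) [CommRing K] : Form n K →ₗ[K] Form n K :=
  dTwist (fun _ => 0)

/-- Multiplication of a form by a 1-form `α`, `ω ↦ α ∧ ω`. -/
def wedge1 {n : ℕ} {K : Type*} [CommRing K]
    (α : Fin n → MvPolynomial (Fin n) K) :
    Form n K →ₗ[K] Form n K where
  toFun ω := fun s => ∑ i ∈ s, sgn K s i * (α i * ω (s.erase i))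
  map_add' ω₁ ω₂ := by
    funext s
    simp only [Pi.add_apply]
    rw [← Finset.sum_add_distrib]
    refine Finset.sum_congr rfl fun i _ => ?_
    ring
  map_smul' c ω := by
    funext s
    simp only [Pi.smul_apply, RingHom.id_apply, Finset.smul_sum]
    refine Finset.sum_congr rfl fun i _ => ?_
    simp [mul_smul_comm]

/-- Forms of pure degree `k`: those supported on index sets of cardinality `k`. -/
def formDeg (n : ℕ) (K : Type*) [CommRing K] (k : ℕ) : Submodule K (Form n K) where
  carrier := {ω | ∀ s : Finset (Fin n), s.card ≠ k → ω s = 0}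
  add_mem' := by
    intro a b ha hb s hs
    simp [Pi.add_apply, ha s hs, hb s hs]
  zero_mem' := fun s _ => rfl
  smul_mem' := by
    intro c a ha s hs
    simp [Pi.smul_apply, ha s hs]

/-- Degree-`k` cocycles of the twisted de Rham complex. -/
def cocycles {n : ℕ} {K : Type*} [CommRing K]
    (α : Fin n → MvPolynomial (Fin n) K) (k : ℕ) : Submodule K (Form n K) :=
  formDeg n K k ⊓ LinearMap.ker (dTwist α)

/-- Degree-`k` coboundaries of the twisted de Rham complex. -/
def cobounds {n : ℕ} {K : Type*} [CommRing K]
    (α : Fin n → MvPolynomial (Fin n) K) (k : ℕ) : Submodule K (Form n K) :=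
  Submodule.map (dTwist α) (formDeg n K (k - 1))

/-- The degree-`k` twisted de Rham cohomology of the 1-form `α`. -/
abbrev Htwist {n : ℕ} {K : Type*} [CommRing K]
    (α : Fin n → MvPolynomial (Fin n) K) (k : ℕ) :=
  (cocycles α k) ⧸ (Submodule.comap (cocycles α k).subtype (cobounds α k))

/-- The differential `df` of a polynomial, as the family of coefficients of the
1-form `Σ_i (∂f/∂x_i) dx_i`. -/
def grad {n : ℕ} {K : Type*} [CommRing K] (f : MvPolynomial (Fin n) K) :
    Fin n → MvPolynomial (Fin n) K :=
  fun i => pderiv i f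

/-- The twisted de Rham cohomology `H^k_f(K)` of a polynomial `f`. -/
abbrev Hf {n : ℕ} {K : Type*} [CommRing K] (f : MvPolynomial (Fin n) K) (k : ℕ) :=
  Htwist (grad f) k

/-- The top form `dx_1 ∧ ⋯ ∧ dx_n`. -/
def topForm (n : ℕ) (K : Type*) [CommRing K] : Form n K :=
  fun s => if s = Finset.univ then 1 else 0


/-- The ring `R_N = R[λ]/(λ^N)`. -/
abbrev RN (R : Type*) [CommRing R] (N : ℕ) : Type _ :=
  Polynomial R ⧸ Ideal.span {(Polynomial.X : Polynomial R) ^ N}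

/-- The canonical map `R → R_N`. -/
def toRN (R : Type*) [CommRing R] (N : ℕ) : R →+* RN R N :=
  (Ideal.Quotient.mk _).comp Polynomial.C

/-- The class of `λ` in `R_N = R[λ]/(λ^N)`. -/
def lamRN (R : Type*) [CommRing R] (N : ℕ) : RN R N :=
  Ideal.Quotient.mk _ Polynomial.X

/-- The 1-form `df = Σ_{a,b} A_{ab} x_b dx_a + λ dV` associated to the
perturbed quadratic function `f = ½xᵗAx + λV`, given by its coefficient family
(defined even when `2` is not invertible). -/
def perturbedDf {n : ℕ} {R : Type*} [CommRing R] (N : ℕ)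
    (A : Matrix (Fin n) (Fin n) R) (V : MvPolynomial (Fin n) R) :
    Fin n → MvPolynomial (Fin n) (RN R N) :=
  fun a => (∑ b, C (toRN R N (A a b)) * X b) +
    C (lamRN R N) * pderiv a (MvPolynomial.map (toRN R N) V)


/-! ### Part 1: the Koszul complex of the variables -/

/-- Division by `x_j`. -/
def quotX {n : ℕ} {K : Type*} [CommRing K] (j : Fin n) :
    MvPolynomial (Fin n) K →+ MvPolynomial (Fin n) K where
  toFun p := p.divMonomial (Finsupp.single j 1)
  map_zero' := zero_divMonomial _
  map_add' p q := add_divMonomial p q _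

/-- Setting `x_j = 0` for `j ∈ J`. -/
def evJ {n : ℕ} {K : Type*} [CommRing K] (J : Finset (Fin n)) :
    MvPolynomial (Fin n) K →ₐ[K] MvPolynomial (Fin n) K :=
  aeval (fun k => if k ∈ J then 0 else X k)

section koszul
variable {n : ℕ} {K : Type*} [CommRing K]

lemma quotX_X_mul_self (j : Fin n) (p : MvPolynomial (Fin n) K) :
    quotX j (X j * p) = p := X_mul_divMonomial j p

lemma quotX_X_mul_of_ne {i j : Fin n} (h : i ≠ j) (p : MvPolynomial (Fin n) K) :
    quotX j (X i * p) = X i * quotX j p := by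
  ext m
  change coeff m ((X i * p).divMonomial _) = coeff m (X i * p.divMonomial _)
  rw [coeff_divMonomial, coeff_X_mul', coeff_X_mul']
  have : (i ∈ (Finsupp.single j 1 + m).support) ↔ i ∈ m.support := by
    simp [Finsupp.single_apply, h.symm]
  by_cases hi : i ∈ m.support
  · rw [if_pos hi, if_pos (this.2 hi), coeff_divMonomial]
    congr 1
    rw [add_tsub_assoc_of_le]
    simpa [Nat.one_le_iff_ne_zero] using hi
  · rw [if_neg hi, if_neg (fun h => hi (this.1 h))]

lemma quotX_C (j : Fin n) (a : K) : quotX j (C a : MvPolynomial (Fin n) K) = 0 := by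
  ext m
  change coeff m ((C a : MvPolynomial (Fin n) K).divMonomial _) = _
  rw [coeff_divMonomial, coeff_C, if_neg, coeff_zero]
  intro h
  have := DFunLike.congr_fun h j
  simp at this
  omega

lemma X_mul_quotX (j : Fin n) (p : MvPolynomial (Fin n) K) :
    X j * quotX j p = p - evJ {j} p := by
  induction p using MvPolynomial.induction_on with
  | C a => simp [quotX_C, evJ]
  | add p q hp hq => rw [map_add, mul_add, hp, hq, map_add]; ring
  | mul_X p i hp =>
    rw [mul_comm p]
    by_cases h : i = j
    · subst h
      rw [quotX_X_mul_self, map_mul]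
      simp [evJ]
    · rw [quotX_X_mul_of_ne h, mul_left_comm, hp, map_mul]
      have : evJ {j} (X i : MvPolynomial (Fin n) K) = X i := by simp [evJ, h]
      rw [this]; ring

lemma evJ_evJ (j : Fin n) (J : Finset (Fin n)) (p : MvPolynomial (Fin n) K) :
    evJ {j} (evJ J p) = evJ (insert j J) p := by
  have : (evJ {j} : MvPolynomial (Fin n) K →ₐ[K] _).comp (evJ J) = evJ (insert j J) := by
    ext1 k
    by_cases h' : k = j
    · subst h'
      by_cases h : k ∈ J <;> simp [evJ, h]
    · by_cases h : k ∈ J <;> simp [evJ, h, h']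
  exact DFunLike.congr_fun this p

lemma evJ_univ (p : MvPolynomial (Fin n) K) :
    evJ Finset.univ p = C (constantCoeff p) := by
  have : (fun k : Fin n => if k ∈ Finset.univ then (0 : MvPolynomial (Fin n) K) else X k)
    = fun _ => 0 := by ext1; simp
  rw [evJ, this]
  exact aeval_zero' p

lemma evJ_empty (p : MvPolynomial (Fin n) K) : evJ ∅ p = p := by
  simp [evJ]

lemma sgn_eq_prod (s : Finset (Fin n)) (i : Fin n) :
    sgn K s i = ∏ k ∈ s, if k < i then -1 else 1 := by
  rw [sgn, Finset.prod_ite, Finset.prod_const, Finset.prod_const_one, mul_one]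

lemma sgn_mul_self (s : Finset (Fin n)) (i : Fin n) : sgn K s i * sgn K s i = 1 := by
  rw [sgn, ← pow_add, ← two_mul, pow_mul]; simp

lemma sgn_insert_self (s : Finset (Fin n)) (i : Fin n) : sgn K (insert i s) i = sgn K s i := by
  by_cases h : i ∈ s
  · rw [Finset.insert_eq_of_mem h]
  · rw [sgn_eq_prod, sgn_eq_prod, Finset.prod_insert h]; simp

lemma sgn_erase_self (s : Finset (Fin n)) (i : Fin n) : sgn K (s.erase i) i = sgn K s i := by
  by_cases h : i ∈ s
  · conv_rhs => rw [← Finset.insert_erase h, sgn_insert_self]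
  · rw [Finset.erase_eq_of_notMem h]

lemma sgn_swap {s : Finset (Fin n)} {i j : Fin n} (hi : i ∈ s) (hj : j ∉ s) :
    sgn K s j * sgn K (insert j s) i = - (sgn K s i * sgn K (s.erase i) j) := by
  have h1 : sgn K (insert j s) i = (if j < i then -1 else 1) * sgn K s i := by
    rw [sgn_eq_prod, sgn_eq_prod, Finset.prod_insert hj]
  have h2 : sgn K s j = (if i < j then -1 else 1) * sgn K (s.erase i) j := by
    rw [sgn_eq_prod, sgn_eq_prod, Finset.mul_prod_erase s (fun k => if k < j then _ else _) hi]
  have hne : i ≠ j := fun h => hj (h ▸ hi)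
  rw [h1, h2]
  rcases lt_or_gt_of_ne hne with h | h
  · rw [if_pos h, if_neg h.asymm]; ring
  · rw [if_neg h.asymm, if_pos h]; ring

lemma sgn_cases (s : Finset (Fin n)) (i : Fin n) : sgn K s i = 1 ∨ sgn K s i = -1 := by
  rw [sgn]; exact neg_one_pow_eq_or _ _

lemma map_sgn_mul {M : Type*} [FunLike M (MvPolynomial (Fin n) K) (MvPolynomial (Fin n) K)]
    [AddMonoidHomClass M (MvPolynomial (Fin n) K) (MvPolynomial (Fin n) K)] (f : M)
    (s : Finset (Fin n)) (i : Fin n) (p : MvPolynomial (Fin n) K) :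
    f (sgn K s i * p) = sgn K s i * f p := by
  rcases sgn_cases (K := K) s i with h | h <;> rw [h] <;> simp

/-- the homotopy in direction `j` -/
def hom1 (j : Fin n) (ω : Form n K) : Form n K := fun s =>
  if j ∈ s then 0 else sgn K s j * quotX j (ω (insert j s))

/-- the projection for a set of directions -/
def proj1 (J : Finset (Fin n)) (ω : Form n K) : Form n K := fun s =>
  if J ⊆ s then evJ J (ω s) else 0

lemma wedge1_apply (α : Fin n → MvPolynomial (Fin n) K) (ω : Form n K) (s : Finset (Fin n)) :
    wedge1 α ω s = ∑ i ∈ s, sgn K s i * (α i * ω (s.erase i)) := rfl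

lemma aux_sq {S : Type*} [CommRing S] (a x q : S) (h : a * a = 1) : a * (x * (a * q)) = x * q := by
  linear_combination x * q * h

lemma aux_swap {S : Type*} [CommRing S] (a b c d x q : S) (h : a * b = -(c * d)) :
    c * (x * (d * q)) + a * (b * (x * q)) = 0 := by
  linear_combination x * q * h

lemma homotopy1 (j : Fin n) (ω : Form n K) :
    wedge1 X (hom1 j ω) + hom1 j (wedge1 X ω) = ω - proj1 {j} ω := by
  funext s
  simp only [Pi.add_apply, Pi.sub_apply]
  by_cases hj : j ∈ s
  · have h1 : hom1 j (wedge1 X ω) s = 0 := by simp [hom1, hj]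
    have h2 : proj1 {j} ω s = evJ {j} (ω s) := by simp [proj1, hj]
    rw [h1, h2, add_zero, wedge1_apply, Finset.sum_eq_single_of_mem j hj]
    · rw [hom1, if_neg (Finset.notMem_erase j s), Finset.insert_erase hj, sgn_erase_self,
        ← X_mul_quotX]
      exact aux_sq _ _ _ (sgn_mul_self s j)
    · intro i hi hij
      rw [hom1, if_pos (Finset.mem_erase.2 ⟨hij.symm, hj⟩)]; simp
  · have h2 : proj1 {j} ω s = 0 := by simp [proj1, hj]
    rw [h2, sub_zero]
    have h3 : hom1 j (wedge1 X ω) s = ω s + ∑ i ∈ s, sgn K s j * (sgn K (insert j s) i *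
        (X i * quotX j (ω (insert j (s.erase i))))) := by
      rw [hom1, if_neg hj, wedge1_apply, map_sum, Finset.sum_insert hj, mul_add, Finset.mul_sum]
      refine congrArg₂ (· + ·) ?_ ?_
      · rw [map_sgn_mul, quotX_X_mul_self, sgn_insert_self, Finset.erase_insert hj, ← mul_assoc,
          sgn_mul_self, one_mul]
      · refine Finset.sum_congr rfl fun i hi => ?_
        have hne : i ≠ j := fun h => hj (h ▸ hi)
        rw [map_sgn_mul, quotX_X_mul_of_ne hne, Finset.erase_insert_of_ne hne.symm]
    rw [h3, wedge1_apply, add_left_comm, ← Finset.sum_add_distrib, Finset.sum_eq_zero, add_zero]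
    intro i hi
    rw [hom1, if_neg (fun h => hj (Finset.mem_of_mem_erase h))]
    exact aux_swap _ _ _ _ _ _ (sgn_swap hi hj)

lemma proj1_wedge1 (j : Fin n) (ω : Form n K) :
    wedge1 X (proj1 {j} ω) = proj1 {j} (wedge1 X ω) := by
  funext s
  by_cases hj : j ∈ s
  · rw [proj1, if_pos (by simpa using hj), wedge1_apply, wedge1_apply, map_sum]
    refine Finset.sum_congr rfl fun i hi => ?_
    rw [map_sgn_mul, map_mul]
    by_cases hij : i = j
    · subst hij
      simp [proj1, evJ]
    · have h1 : evJ {j} (X i : MvPolynomial (Fin n) K) = X i := by simp [evJ, hij]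
      rw [proj1, if_pos (by simpa using ⟨fun h => hij h.symm, hj⟩), h1]
  · rw [proj1, if_neg (by simpa using hj), wedge1_apply]
    refine Finset.sum_eq_zero fun i hi => ?_
    rw [proj1, if_neg]
    · simp
    · simp [hj]

lemma proj1_insert (j : Fin n) (J : Finset (Fin n)) (ω : Form n K) :
    proj1 {j} (proj1 J ω) = proj1 (insert j J) ω := by
  funext s
  by_cases h : j ∈ s <;> by_cases h' : J ⊆ s <;>
    simp [proj1, h, h', Finset.insert_subset_iff, evJ_evJ]

lemma proj1_mem (J : Finset (Fin n)) {ω : Form n K} {k : ℕ} (h : ω ∈ formDeg n K k) :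
    proj1 J ω ∈ formDeg n K k := by
  intro s hs
  simp [proj1, h s hs]

lemma hom1_mem (j : Fin n) {ω : Form n K} {k : ℕ} (h : ω ∈ formDeg n K k) :
    hom1 j ω ∈ formDeg n K (k - 1) := by
  intro s hs
  by_cases hj : j ∈ s
  · simp [hom1, hj]
  · have := h (insert j s) (by rw [Finset.card_insert_of_notMem hj]; omega)
    simp [hom1, this]

lemma koszul_step {k : ℕ} {ω : Form n K} (h : ω ∈ formDeg n K k) (hω : wedge1 X ω = 0)
    (J : Finset (Fin n)) :
    wedge1 X (proj1 J ω) = 0 ∧ ∃ η ∈ formDeg n K (k - 1), ω = wedge1 X η + proj1 J ω := by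
  induction J using Finset.induction_on with
  | empty =>
    have : proj1 ∅ ω = ω := by funext s; simp [proj1, evJ_empty]
    rw [this]
    exact ⟨hω, 0, Submodule.zero_mem _, by simp⟩
  | insert j J _ ih =>
    obtain ⟨h1, η, hη, h2⟩ := ih
    rw [← proj1_insert]
    refine ⟨?_, η + hom1 j (proj1 J ω), Submodule.add_mem _ hη (hom1_mem j (proj1_mem J h)), ?_⟩
    · rw [proj1_wedge1, h1]; funext s; simp [proj1]
    · have h3 := homotopy1 j (proj1 J ω)
      have h4 : hom1 j (0 : Form n K) = 0 := by funext s; simp [hom1]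
      rw [h1, h4, add_zero] at h3
      rw [map_add, h3, add_assoc, sub_add_cancel]
      exact h2

lemma koszul_main {k : ℕ} {ω : Form n K} (h : ω ∈ formDeg n K k) (hω : wedge1 X ω = 0) :
    ∃ η ∈ formDeg n K (k - 1),
      ω = wedge1 X η + constantCoeff (ω Finset.univ) • topForm n K := by
  obtain ⟨-, η, hη, h2⟩ := koszul_step h hω Finset.univ
  refine ⟨η, hη, ?_⟩
  conv_lhs => rw [h2]
  congr 1
  funext s
  by_cases hs : s = Finset.univ
  · subst hs
    simp [proj1, topForm, evJ_univ, MvPolynomial.smul_eq_C_mul]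
  · simp [proj1, topForm, hs, Finset.univ_subset_iff]

lemma constantCoeff_wedge1 (η : Form n K) : constantCoeff (wedge1 X η Finset.univ) = 0 := by
  rw [wedge1_apply, map_sum]
  exact Finset.sum_eq_zero fun i _ => by simp

end koszul

/-! ### Part 2: polynomials are free of rank one over the commuting operators `∂_i + α_i` -/

section operators
variable {n : ℕ} {K : Type*} [CommRing K]

lemma exists_algHom_of_commute {σ P : Type*} [AddCommGroup P] [Module K P]
    (D : σ → Module.End K P) (h : ∀ i j, D i * D j = D j * D i) :
    ∃ F : MvPolynomial σ K →ₐ[K] Module.End K P, ∀ i, F (X i) = D i := by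
  have hc : ∀ a ∈ Set.range D, ∀ b ∈ Set.range D, a * b = b * a := by
    rintro _ ⟨i, rfl⟩ _ ⟨j, rfl⟩; exact h i j
  letI : CommRing (Algebra.adjoin K (Set.range D)) := Algebra.adjoinCommRingOfComm K hc
  refine ⟨(Algebra.adjoin K (Set.range D)).val.comp
    (aeval fun i => (⟨D i, Algebra.subset_adjoin ⟨i, rfl⟩⟩ : Algebra.adjoin K (Set.range D))), ?_⟩
  intro i
  simp

/-- The operator `∂_i + α_i`. -/
def opD (α : Fin n → MvPolynomial (Fin n) K) (i : Fin n) :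
    Module.End K (MvPolynomial (Fin n) K) :=
  (pderiv i).toLinearMap + LinearMap.mulLeft K (α i)

lemma opD_apply (α : Fin n → MvPolynomial (Fin n) K) (i : Fin n) (p : MvPolynomial (Fin n) K) :
    opD α i p = pderiv i p + α i * p := by
  simp [opD]

lemma pderiv_comm' (i j : Fin n) (p : MvPolynomial (Fin n) K) :
    pderiv i (pderiv j p) = pderiv j (pderiv i p) := by
  induction p using MvPolynomial.induction_on with
  | C a => simp
  | add p q hp hq => simp only [map_add, hp, hq]
  | mul_X p k hp =>
    have h (a b : Fin n) : pderiv a (pderiv b (X k : MvPolynomial (Fin n) K)) = 0 := by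
      by_cases hb : k = b
      · subst hb; simp
      · simp [pderiv_X_of_ne hb]
    simp only [pderiv_mul, map_add, hp, h]
    ring

lemma opD_comm (α : Fin n → MvPolynomial (Fin n) K)
    (hα : ∀ i j, pderiv i (α j) = pderiv j (α i)) (i j : Fin n) :
    opD α i * opD α j = opD α j * opD α i := by
  refine LinearMap.ext fun p => ?_
  simp only [Module.End.mul_apply, opD_apply]
  simp only [map_add, pderiv_mul, hα i j, pderiv_comm' i j p]
  ring

/-- polynomials that are of degree `< d` modulo `I` -/
def degI (I : Ideal K) (d : ℕ) : Submodule K (MvPolynomial (Fin n) K) where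
  carrier := {p | ∀ m : Fin n →₀ ℕ, d ≤ m.degree → coeff m p ∈ I}
  add_mem' := by
    intro a b ha hb m hm
    rw [coeff_add]; exact I.add_mem (ha m hm) (hb m hm)
  zero_mem' := by intro m _; simp
  smul_mem' := by
    intro c a ha m hm
    rw [coeff_smul, smul_eq_mul]; exact I.mul_mem_left c (ha m hm)

lemma degI_mono (I : Ideal K) {d e : ℕ} (h : d ≤ e) :
    degI (n := n) I d ≤ degI I e := fun _ hp m hm => hp m (h.trans hm)

lemma degI_X_mul (I : Ideal K) {d : ℕ} (i : Fin n) {p : MvPolynomial (Fin n) K}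
    (hp : p ∈ degI I d) : X i * p ∈ degI I (d + 1) := by
  intro m hm
  rw [coeff_X_mul']
  split_ifs with h
  · apply hp
    have h1 : Finsupp.single i 1 ≤ m := by
      simpa [Nat.one_le_iff_ne_zero] using h
    have h2 : (m - Finsupp.single i 1).degree + (Finsupp.single i 1).degree = m.degree := by
      rw [← map_add, tsub_add_cancel_of_le h1]
    rw [Finsupp.degree_single] at h2
    omega
  · exact I.zero_mem

lemma degI_pderiv (I : Ideal K) {d : ℕ} (i : Fin n) {p : MvPolynomial (Fin n) K}
    (hp : p ∈ degI I (d + 1)) : pderiv i p ∈ degI I d := by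
  intro m hm
  rw [coeff_pderiv]
  have : coeff (m + Finsupp.single i 1) p ∈ I := by
    apply hp
    rw [map_add, Finsupp.degree_single]; omega
  exact I.mul_mem_right _ this

lemma degI_smul (I : Ideal K) {c : K} (hc : c ∈ I) (d : ℕ) (p : MvPolynomial (Fin n) K) :
    c • p ∈ degI I d := by
  intro m _
  rw [coeff_smul, smul_eq_mul]; exact I.mul_mem_right _ hc

lemma degI_monomial (I : Ideal K) (m : Fin n →₀ ℕ) (c : K) :
    monomial m c ∈ degI I (m.degree + 1) := by
  intro m' hm'
  rw [coeff_monomial, if_neg]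
  · exact I.zero_mem
  · rintro rfl; omega

/-- the key estimate -/
lemma degI_key (lam : K) (B : Matrix (Fin n) (Fin n) K) (g : Fin n → MvPolynomial (Fin n) K)
    (ψ : Module.End K (MvPolynomial (Fin n) K)) (h1 : ψ 1 = 1)
    (hX : ∀ i p, ψ (X i * p) = X i * ψ p + ∑ j, B i j • pderiv j (ψ p) + lam • (g i * ψ p))
    (m : Fin n →₀ ℕ) :
    ψ (monomial m 1) - monomial m 1 ∈ degI (Ideal.span {lam}) m.degree := by
  induction hd : m.degree generalizing m with
  | zero =>
    have : m = 0 := (Finsupp.degree_eq_zero_iff m).1 hd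
    subst this
    have h0 : (monomial (0 : Fin n →₀ ℕ) (1 : K)) = 1 := rfl
    rw [h0, h1, sub_self]
    exact Submodule.zero_mem _
  | succ d ih =>
    have hm : m ≠ 0 := by rintro rfl; simp at hd
    obtain ⟨i, hi⟩ := Finsupp.ne_iff.1 hm
    have h2 : Finsupp.single i 1 ≤ m := by
      simpa [Nat.one_le_iff_ne_zero] using hi
    obtain ⟨m', rfl⟩ := exists_add_of_le h2
    rw [map_add, Finsupp.degree_single] at hd
    have hd' : m'.degree = d := by omega
    have h3 := ih m' hd'
    have h4 : monomial (Finsupp.single i 1 + m') (1 : K) = X i * monomial m' 1 := by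
      rw [X, monomial_mul, one_mul]
    have h5 := degI_monomial (Ideal.span {lam}) m' (1 : K)
    rw [hd'] at h5
    have h6 : ψ (monomial m' 1) ∈ degI (Ideal.span {lam}) (d + 1) := by
      have := Submodule.add_mem _ (degI_mono _ (Nat.le_succ d) h3) h5
      rwa [sub_add_cancel] at this
    rw [h4, hX]
    have h7 : X i * ψ (monomial m' 1) + ∑ j, B i j • pderiv j (ψ (monomial m' 1))
        + lam • (g i * ψ (monomial m' 1)) - X i * monomial m' 1
        = X i * (ψ (monomial m' 1) - monomial m' 1) + ∑ j, B i j • pderiv j (ψ (monomial m' 1))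
        + lam • (g i * ψ (monomial m' 1)) := by ring
    rw [h7]
    refine Submodule.add_mem _ (Submodule.add_mem _ (degI_X_mul _ i h3) ?_) ?_
    · refine Submodule.sum_mem _ fun j _ => Submodule.smul_mem _ _ ?_
      exact degI_mono _ (Nat.le_succ d) (degI_pderiv _ j h6)
    · exact degI_smul _ (Ideal.mem_span_singleton_self lam) _ _

lemma degI_step (I : Ideal K) (E : Module.End K (MvPolynomial (Fin n) K))
    (hE : ∀ m : Fin n →₀ ℕ, E (monomial m 1) ∈ degI I m.degree) {d : ℕ}
    {p : MvPolynomial (Fin n) K} (hp : p ∈ degI I (d + 1)) : E p ∈ degI I d := by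
  rw [p.as_sum, map_sum]
  refine Submodule.sum_mem _ fun m _ => ?_
  have : monomial m (coeff m p) = coeff m p • monomial m (1 : K) := by
    rw [smul_monomial, smul_eq_mul, mul_one]
  rw [this, map_smul]
  by_cases h : m.degree ≤ d
  · exact Submodule.smul_mem _ _ (degI_mono I h (hE m))
  · exact degI_smul I (hp m (by omega)) _ _

lemma degI_iter (I : Ideal K) (E : Module.End K (MvPolynomial (Fin n) K))
    (hE : ∀ m : Fin n →₀ ℕ, E (monomial m 1) ∈ degI I m.degree) (d : ℕ)
    {p : MvPolynomial (Fin n) K} (hp : p ∈ degI I d) : (E ^ d) p ∈ degI I 0 := by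
  induction d generalizing p with
  | zero => simpa using hp
  | succ d ih =>
    rw [pow_succ, Module.End.mul_apply]
    exact ih (degI_step I E hE hp)

lemma exists_degI (I : Ideal K) (p : MvPolynomial (Fin n) K) : ∃ d, p ∈ degI I d := by
  induction p using MvPolynomial.induction_on' with
  | monomial m c => exact ⟨_, degI_monomial I m c⟩
  | add p q hp hq =>
    obtain ⟨d, hd⟩ := hp
    obtain ⟨e, he⟩ := hq
    exact ⟨max d e, Submodule.add_mem _ (degI_mono I (le_max_left _ _) hd)
      (degI_mono I (le_max_right _ _) he)⟩

lemma locally_nilpotent (lam : K) (E : Module.End K (MvPolynomial (Fin n) K))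
    (hE : ∀ m : Fin n →₀ ℕ, E (monomial m 1) ∈ degI (Ideal.span {lam}) m.degree)
    (p : MvPolynomial (Fin n) K) (k : ℕ) :
    ∃ d q, (E ^ d) p = lam ^ k • q := by
  induction k with
  | zero => exact ⟨0, p, by simp⟩
  | succ k ih =>
    obtain ⟨d, q, h⟩ := ih
    obtain ⟨e, he⟩ := exists_degI (Ideal.span {lam}) q
    have h1 := degI_iter _ E hE e he
    have h2 : C lam ∣ (E ^ e) q := by
      rw [C_dvd_iff_dvd_coeff]
      intro m
      exact Ideal.mem_span_singleton.1 (h1 m (Nat.zero_le _))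
    obtain ⟨r, hr⟩ := h2
    refine ⟨e + d, r, ?_⟩
    rw [pow_add, Module.End.mul_apply, h, map_smul, hr, ← smul_eq_C_mul, smul_smul, pow_succ]

lemma bijective_of_locally_nilpotent {P : Type*} [AddCommGroup P] [Module K P]
    (ψ : Module.End K P) (h : ∀ p, ∃ d : ℕ, ((ψ - 1) ^ d) p = 0) : Function.Bijective ψ := by
  constructor
  · rw [injective_iff_map_eq_zero]
    intro p hp
    obtain ⟨d, hd⟩ := h p
    have : ∀ d : ℕ, ((ψ - 1) ^ d) p = (-1 : K) ^ d • p := by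
      intro d
      induction d with
      | zero => simp
      | succ d ih =>
        rw [pow_succ', Module.End.mul_apply, ih, map_smul, LinearMap.sub_apply, hp, pow_succ,
          mul_smul]
        simp
    rw [this] at hd
    have h2 := congrArg (fun x => (-1 : K) ^ d • x) hd
    simpa [smul_smul, ← pow_add, ← two_mul] using h2
  · have : ∀ (d : ℕ) (p : P), ((ψ - 1) ^ d) p = 0 → ∃ q, ψ q = p := by
      intro d
      induction d with
      | zero => intro p hp; exact ⟨0, by simpa using hp.symm⟩
      | succ d ih =>
        intro p hp
        rw [pow_succ, Module.End.mul_apply] at hp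
        obtain ⟨q, hq⟩ := ih _ hp
        refine ⟨p - q, ?_⟩
        rw [map_sub, hq]
        simp
    intro p
    obtain ⟨d, hd⟩ := h p
    exact this d p hd

/-- linear substitution -/
def linSub (A : Matrix (Fin n) (Fin n) K) :
    MvPolynomial (Fin n) K →ₐ[K] MvPolynomial (Fin n) K :=
  aeval fun i => ∑ j, C (A i j) * X j

lemma linSub_X (A : Matrix (Fin n) (Fin n) K) (i : Fin n) :
    linSub A (X i) = ∑ j, C (A i j) * X j := by simp [linSub]

lemma linSub_linSub (A B : Matrix (Fin n) (Fin n) K) (hAB : A * B = 1)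
    (p : MvPolynomial (Fin n) K) : linSub B (linSub A p) = p := by
  have : (linSub B).comp (linSub A) = AlgHom.id K _ := by
    ext1 i
    have h (j : Fin n) : linSub B (C (A i j)) = C (A i j) := (linSub B).commutes _
    rw [AlgHom.comp_apply, linSub_X, map_sum]
    simp only [map_mul, h, linSub_X, Finset.mul_sum]
    rw [Finset.sum_comm]
    have h2 (k : Fin n) : ∑ j, C (A i j) * (C (B j k) * X k)
        = C ((1 : Matrix (Fin n) (Fin n) K) i k) * (X k : MvPolynomial (Fin n) K) := by
      rw [← hAB, Matrix.mul_apply, map_sum, Finset.sum_mul]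
      refine Finset.sum_congr rfl fun j _ => ?_
      rw [C_mul, mul_assoc]
    simp only [h2, AlgHom.id_apply, Matrix.one_apply]
    simp
  exact DFunLike.congr_fun this p

theorem exists_phi (lam : K) (N : ℕ) (hlam : lam ^ N = 0) (A B : Matrix (Fin n) (Fin n) K)
    (hsymm : A.IsSymm) (hAB : A * B = 1) (hBA : B * A = 1) (V : MvPolynomial (Fin n) K)
    (α : Fin n → MvPolynomial (Fin n) K)
    (hα : ∀ a, α a = (∑ b, C (A a b) * X b) + C lam * pderiv a V) :
    ∃ φ : MvPolynomial (Fin n) K ≃ₗ[K] MvPolynomial (Fin n) K,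
      φ 1 = 1 ∧ ∀ i p, φ (X i * p) = pderiv i (φ p) + α i * φ p := by
  have hcl : ∀ i j, pderiv i (α j) = pderiv j (α i) := by
    have h0 : ∀ i j, pderiv i (α j) = C (A j i) + C lam * pderiv i (pderiv j V) := by
      intro i j
      rw [hα, map_add, pderiv_C_mul, map_sum]
      congr 1
      simp [pderiv_C_mul, pderiv_X, Pi.single_apply]
    intro i j
    rw [h0, h0, pderiv_comm' i j, hsymm.apply]
  obtain ⟨F, hF⟩ := exists_algHom_of_commute (opD α) (opD_comm α hcl)
  let φ : Module.End K (MvPolynomial (Fin n) K) :=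
    (LinearMap.applyₗ (1 : MvPolynomial (Fin n) K)).comp F.toLinearMap
  have hφ : ∀ p, φ p = F p 1 := fun p => rfl
  have hφ1 : φ 1 = 1 := by rw [hφ, map_one F, Module.End.one_apply]
  have hφX : ∀ i p, φ (X i * p) = pderiv i (φ p) + α i * φ p := by
    intro i p
    rw [hφ, map_mul, hF, Module.End.mul_apply, opD_apply, ← hφ]
  let ψ : Module.End K (MvPolynomial (Fin n) K) := φ.comp (linSub B).toLinearMap
  have hψ : ∀ p, ψ p = φ (linSub B p) := fun p => rfl
  have hψX : ∀ i p, ψ (X i * p) = X i * ψ p + ∑ j, B i j • pderiv j (ψ p)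
      + lam • ((∑ j, C (B i j) * pderiv j V) * ψ p) := by
    intro i p
    rw [hψ, map_mul, linSub_X, Finset.sum_mul, map_sum]
    have h1 (j : Fin n) : φ (C (B i j) * X j * linSub B p)
        = B i j • pderiv j (ψ p) + C (B i j) * α j * ψ p := by
      rw [mul_assoc, ← smul_eq_C_mul, map_smul, hφX, smul_add, ← hψ, smul_eq_C_mul (α j * ψ p),
        mul_assoc]
    have h2 : ∑ j, C (B i j) * α j = X i + C lam * ∑ j, C (B i j) * pderiv j V := by
      have h3 := linSub_linSub B A hBA (X i : MvPolynomial (Fin n) K)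
      rw [linSub_X, map_sum] at h3
      have h4 (j : Fin n) : linSub A (C (B i j)) = C (B i j) := (linSub A).commutes _
      simp only [map_mul, h4, linSub_X] at h3
      rw [← h3, Finset.mul_sum, ← Finset.sum_add_distrib]
      refine Finset.sum_congr rfl fun j _ => ?_
      rw [hα]; ring
    simp only [h1]
    rw [Finset.sum_add_distrib, ← Finset.sum_mul, h2, smul_eq_C_mul]
    ring
  have hψ1 : ψ 1 = 1 := by rw [hψ, map_one (linSub B), hφ1]
  have hE : ∀ m : Fin n →₀ ℕ, (ψ - 1) (monomial m 1) ∈ degI (Ideal.span {lam}) m.degree := by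
    intro m
    exact degI_key lam B _ ψ hψ1 hψX m
  have hbij : Function.Bijective ψ := by
    apply bijective_of_locally_nilpotent
    intro p
    obtain ⟨d, q, h⟩ := locally_nilpotent lam _ hE p N
    exact ⟨d, by rw [h, hlam, zero_smul]⟩
  have hφψ : ∀ p, φ p = ψ (linSub A p) := fun p => by rw [hψ, linSub_linSub A B hAB]
  have hφbij : Function.Bijective φ := by
    have h1 : (φ : _ → _) = ψ ∘ linSub A := funext hφψ
    rw [h1]
    exact hbij.comp ⟨Function.LeftInverse.injective (linSub_linSub A B hAB),
      Function.RightInverse.surjective (linSub_linSub B A hBA)⟩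
  exact ⟨LinearEquiv.ofBijective φ hφbij, hφ1, hφX⟩

end operators

/-! ### Part 3: transport and conclusion -/

section conclusion
variable {n : ℕ} {K : Type*} [CommRing K]

/-- apply a linear equivalence to all coefficients -/
def mapForm (φ : MvPolynomial (Fin n) K ≃ₗ[K] MvPolynomial (Fin n) K) :
    Form n K ≃ₗ[K] Form n K :=
  LinearEquiv.piCongrRight fun _ => φ

lemma mapForm_apply (φ : MvPolynomial (Fin n) K ≃ₗ[K] MvPolynomial (Fin n) K) (ω : Form n K)
    (s : Finset (Fin n)) : mapForm φ ω s = φ (ω s) := rfl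

lemma mapForm_symm_apply (φ : MvPolynomial (Fin n) K ≃ₗ[K] MvPolynomial (Fin n) K) (ω : Form n K)
    (s : Finset (Fin n)) : (mapForm φ).symm ω s = φ.symm (ω s) := rfl

lemma mapForm_mem (φ : MvPolynomial (Fin n) K ≃ₗ[K] MvPolynomial (Fin n) K) {ω : Form n K}
    {k : ℕ} (h : ω ∈ formDeg n K k) : mapForm φ ω ∈ formDeg n K k := by
  intro s hs
  rw [mapForm_apply, h s hs, map_zero]

lemma mapForm_symm_mem (φ : MvPolynomial (Fin n) K ≃ₗ[K] MvPolynomial (Fin n) K) {ω : Form n K}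
    {k : ℕ} (h : ω ∈ formDeg n K k) : (mapForm φ).symm ω ∈ formDeg n K k := by
  intro s hs
  rw [mapForm_symm_apply, h s hs, map_zero]

lemma dTwist_mapForm (α : Fin n → MvPolynomial (Fin n) K)
    (φ : MvPolynomial (Fin n) K ≃ₗ[K] MvPolynomial (Fin n) K)
    (hX : ∀ i p, φ (X i * p) = pderiv i (φ p) + α i * φ p) (ω : Form n K) :
    dTwist α (mapForm φ ω) = mapForm φ (wedge1 X ω) := by
  funext s
  rw [mapForm_apply, wedge1_apply, map_sum]
  change ∑ i ∈ s, _ = _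
  refine Finset.sum_congr rfl fun i _ => ?_
  rw [map_sgn_mul, hX]
  rfl

lemma mapForm_topForm (φ : MvPolynomial (Fin n) K ≃ₗ[K] MvPolynomial (Fin n) K) (h1 : φ 1 = 1) :
    mapForm φ (topForm n K) = topForm n K := by
  funext s
  by_cases hs : s = Finset.univ <;> simp [mapForm_apply, topForm, hs, h1]

lemma formDeg_top_cocycle (α : Fin n → MvPolynomial (Fin n) K) {ω : Form n K}
    (h : ω ∈ formDeg n K n) : ω ∈ cocycles α n := by
  refine ⟨h, LinearMap.mem_ker.2 ?_⟩
  funext s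
  change ∑ i ∈ s, _ = _
  refine Finset.sum_eq_zero fun i hi => ?_
  have h1 : (s.erase i).card ≠ n := by
    have := Finset.card_erase_lt_of_mem hi
    have h2 := Finset.card_le_univ s
    rw [Fintype.card_fin] at h2
    omega
  rw [h _ h1]; simp

lemma topForm_mem : topForm n K ∈ formDeg n K n := by
  intro s hs
  rw [topForm, if_neg]
  rintro rfl
  simp at hs

/-- decomposition of cocycles -/
lemma cocycle_decomp (α : Fin n → MvPolynomial (Fin n) K)
    (φ : MvPolynomial (Fin n) K ≃ₗ[K] MvPolynomial (Fin n) K) (h1 : φ 1 = 1)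
    (hX : ∀ i p, φ (X i * p) = pderiv i (φ p) + α i * φ p) {k : ℕ} {ω : Form n K}
    (h : ω ∈ cocycles α k) :
    ω - constantCoeff (φ.symm (ω Finset.univ)) • topForm n K ∈ cobounds α k := by
  obtain ⟨hd, hk⟩ := h
  obtain ⟨ω, rfl⟩ := (mapForm φ).surjective ω
  have hd' : ω ∈ formDeg n K k := by
    have := mapForm_symm_mem φ hd
    rwa [LinearEquiv.symm_apply_apply] at this
  replace hk : dTwist α (mapForm φ ω) = 0 := LinearMap.mem_ker.1 hk
  rw [dTwist_mapForm α φ hX, LinearEquiv.map_eq_zero_iff] at hk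
  obtain ⟨η, hη, h2⟩ := koszul_main hd' hk
  refine ⟨mapForm φ η, mapForm_mem φ hη, ?_⟩
  rw [dTwist_mapForm α φ hX, mapForm_apply, LinearEquiv.symm_apply_apply]
  conv_rhs => rw [h2]
  rw [map_add, map_smul, mapForm_topForm φ h1, ← h2, add_sub_cancel_right]

theorem twisted_conclusion (α : Fin n → MvPolynomial (Fin n) K)
    (φ : MvPolynomial (Fin n) K ≃ₗ[K] MvPolynomial (Fin n) K) (h1 : φ 1 = 1)
    (hX : ∀ i p, φ (X i * p) = pderiv i (φ p) + α i * φ p) :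
    ∃ h : topForm n K ∈ cocycles α n,
      (∀ k : ℕ, k ≠ n → Subsingleton (Htwist α k)) ∧
      Nonempty (Htwist α n ≃ₗ[K] K) ∧
      (∀ y : Htwist α n, ∃ r : K,
        y = r • Submodule.Quotient.mk (⟨topForm n K, h⟩ : cocycles α n)) := by
  refine ⟨formDeg_top_cocycle α topForm_mem, ?_, ?_, ?_⟩
  · intro k hk
    rw [Submodule.Quotient.subsingleton_iff, eq_top_iff]
    rintro ⟨ω, hω⟩ -
    have := cocycle_decomp α φ h1 hX hω
    have h0 : ω Finset.univ = 0 := hω.1 _ (by simpa using hk.symm)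
    rw [h0, map_zero, map_zero, zero_smul, sub_zero] at this
    exact this
  · let ℓ : cocycles α n →ₗ[K] K :=
      { toFun := fun ω => constantCoeff (φ.symm (ω.1 Finset.univ))
        map_add' := fun a b => by simp
        map_smul' := fun c a => by
          rw [Submodule.coe_smul, Pi.smul_apply, map_smul, MvPolynomial.smul_eq_C_mul]
          simp }
    have hℓ : ∀ ω, ℓ ω = constantCoeff (φ.symm (ω.1 Finset.univ)) := fun _ => rfl
    have hker : Submodule.comap (cocycles α n).subtype (cobounds α n) = LinearMap.ker ℓ := by
      ext ω
      rw [Submodule.mem_comap, LinearMap.mem_ker, hℓ]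
      constructor
      · rintro ⟨η, -, hη⟩
        obtain ⟨η, rfl⟩ := (mapForm φ).surjective η
        rw [dTwist_mapForm α φ hX] at hη
        rw [Submodule.subtype_apply] at hη
        rw [← hη, mapForm_apply, LinearEquiv.symm_apply_apply, constantCoeff_wedge1]
      · intro h
        have := cocycle_decomp α φ h1 hX ω.2
        rw [h, zero_smul, sub_zero] at this
        exact this
    have hsurj : Function.Surjective ℓ := by
      intro r
      refine ⟨r • ⟨topForm n K, formDeg_top_cocycle α topForm_mem⟩, ?_⟩
      rw [map_smul, hℓ]
      have h2 : φ.symm 1 = 1 := by rw [LinearEquiv.symm_apply_eq, h1]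
      simp [topForm, h2]
    exact ⟨(Submodule.quotEquivOfEq _ _ hker).trans (ℓ.quotKerEquivOfSurjective hsurj)⟩
  · intro y
    obtain ⟨ω, rfl⟩ := Submodule.Quotient.mk_surjective _ y
    refine ⟨constantCoeff (φ.symm (ω.1 Finset.univ)), ?_⟩
    rw [← Submodule.Quotient.mk_smul, Submodule.Quotient.eq]
    exact cocycle_decomp α φ h1 hX ω.2

end conclusion

/-- For an invertible symmetric matrix `A` over a commutative
ring `R`, an arbitrary polynomial `V`, and the perturbed function
`f = ½xᵗAx + λV` over `R_N = R[λ]/(λ^N)`, the twisted de Rham cohomology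
`H^k_f(R_N)` vanishes for `k ≠ n`, and `H^n_f(R_N)` is isomorphic to `R_N`,
generated by the class of `dx_1 ∧ ⋯ ∧ dx_n`. -/
theorem perturbed_quadratic_twisted_deRham_cohomology
    {R : Type*} [CommRing R] {n N : ℕ} (hn : 0 < n) (hN : 0 < N)
    (A B : Matrix (Fin n) (Fin n) R) (hsymm : A.IsSymm)
    (hAB : A * B = 1) (hBA : B * A = 1) (V : MvPolynomial (Fin n) R) :
    ∃ h : topForm n (RN R N) ∈ cocycles (perturbedDf N A V) n,
      (∀ k : ℕ, k ≠ n → Subsingleton (Htwist (perturbedDf N A V) k)) ∧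
      Nonempty (Htwist (perturbedDf N A V) n ≃ₗ[RN R N] RN R N) ∧
      (∀ y : Htwist (perturbedDf N A V) n, ∃ r : RN R N,
        y = r • Submodule.Quotient.mk
          (⟨topForm n (RN R N), h⟩ : cocycles (perturbedDf N A V) n)) := by
  have hlam : lamRN R N ^ N = 0 := by
    rw [lamRN, ← map_pow, Ideal.Quotient.eq_zero_iff_mem]
    exact Ideal.mem_span_singleton_self _
  have key : ∀ M M' : Matrix (Fin n) (Fin n) R, M * M' = 1 →
      M.map (toRN R N) * M'.map (toRN R N) = 1 := by
    intro M M' h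
    rw [← Matrix.map_mul, h]
    exact Matrix.map_one _ (map_zero _) (map_one _)
  obtain ⟨φ, h1, hX⟩ := exists_phi (lamRN R N) N hlam (A.map (toRN R N)) (B.map (toRN R N))
    (hsymm.map _) (key A B hAB) (key B A hBA) (MvPolynomial.map (toRN R N) V)
    (perturbedDf N A V) (fun a => rfl)
  exact twisted_conclusion _ φ h1 hX

end
end

section
/- Let A be a real symmetric negative definite invertible n×n matrix and let f(x) = ½xᵗAx. Then for every polynomial g ∈ ℝ[x_1,…,x_n] and every index k, ∫_{ℝⁿ} x_k·g(x)·e^{½xᵗAx} dx = −Σ_a (A^{-1})_{ka} ∫_{ℝⁿ} (∂g/∂x_a)(x)·e^{½xᵗAx} dx. -/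
open MvPolynomial MeasureTheory

noncomputable section

/-- The quadratic function `f(x) = ½xᵗAx` on `ℝⁿ`. -/
def quadFun {n : ℕ} (A : Matrix (Fin n) (Fin n) ℝ) (x : Fin n → ℝ) : ℝ :=
  (∑ i, ∑ j, A i j * x i * x j) / 2

open scoped Matrix in
lemma quad_bound {n : ℕ} (hn : 0 < n) (A : Matrix (Fin n) (Fin n) ℝ) (hneg : (-A).PosDef) :
    ∃ c : ℝ, 0 < c ∧ ∀ x : Fin n → ℝ, quadFun A x ≤ -c * ∑ i, x i ^ 2 := by
  haveI : NeZero n := ⟨hn.ne'⟩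
  have hcont : Continuous (quadFun A) := by unfold quadFun; fun_prop
  have hneg' : ∀ x : Fin n → ℝ, x ≠ 0 → quadFun A x < 0 := by
    intro x hx
    have := hneg.dotProduct_mulVec_pos hx
    have e : star x ⬝ᵥ ((-A) *ᵥ x) = -(2 * quadFun A x) := by
      simp only [quadFun, dotProduct, Matrix.mulVec, Finset.mul_sum, star_trivial, Matrix.neg_apply]
      rw [mul_div_cancel₀ _ (two_ne_zero), ← Finset.sum_neg_distrib]
      refine Finset.sum_congr rfl fun i _ => ?_
      rw [← Finset.sum_neg_distrib]
      refine Finset.sum_congr rfl fun j _ => ?_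
      ring
    linarith
  have hsm : ∀ (t : ℝ) (x : Fin n → ℝ), quadFun A (t • x) = t ^ 2 * quadFun A x := by
    intro t x
    simp only [quadFun, Pi.smul_apply, smul_eq_mul]
    rw [← mul_div_assoc, Finset.mul_sum]
    congr 1
    refine Finset.sum_congr rfl fun i _ => ?_
    rw [Finset.mul_sum]
    refine Finset.sum_congr rfl fun j _ => ?_
    ring
  obtain ⟨y, hy, hmax⟩ := (isCompact_sphere (0 : Fin n → ℝ) 1).exists_isMaxOn
    (NormedSpace.sphere_nonempty.2 zero_le_one) hcont.continuousOn
  have hy0 : y ≠ 0 := by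
    rintro rfl
    simp at hy
  have hm := hneg' y hy0
  have hn' : (0 : ℝ) < n := by exact_mod_cast hn
  refine ⟨-quadFun A y / n, div_pos (by linarith) hn', fun x => ?_⟩
  by_cases hx : x = 0
  · subst hx
    simp [quadFun]
  have hxn : 0 < ‖x‖ := norm_pos_iff.2 hx
  have h1 : quadFun A (‖x‖⁻¹ • x) ≤ quadFun A y := hmax (by
    simp [norm_smul, hxn.ne'])
  have h2 : quadFun A x = ‖x‖ ^ 2 * quadFun A (‖x‖⁻¹ • x) := by
    rw [← hsm, smul_inv_smul₀ hxn.ne']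
  have h3 : ∑ i, x i ^ 2 ≤ n * ‖x‖ ^ 2 := by
    calc ∑ i, x i ^ 2 ≤ ∑ i : Fin n, ‖x‖ ^ 2 := by
          refine Finset.sum_le_sum fun i _ => ?_
          rw [← sq_abs]
          exact pow_le_pow_left₀ (abs_nonneg _) (norm_le_pi_norm x i) 2
      _ = n * ‖x‖ ^ 2 := by simp
  rw [h2]
  calc ‖x‖ ^ 2 * quadFun A (‖x‖⁻¹ • x) ≤ ‖x‖ ^ 2 * quadFun A y := by gcongr
    _ = quadFun A y / n * (n * ‖x‖ ^ 2) := by field_simp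
    _ ≤ quadFun A y / n * ∑ i, x i ^ 2 :=
        mul_le_mul_of_nonpos_left h3 (div_nonpos_of_nonpos_of_nonneg hm.le hn'.le)
    _ = _ := by ring

lemma poly_int {n : ℕ} (hn : 0 < n) (A : Matrix (Fin n) (Fin n) ℝ) (hneg : (-A).PosDef)
    (g : MvPolynomial (Fin n) ℝ) :
    Integrable (fun x : Fin n → ℝ => eval x g * Real.exp (quadFun A x)) := by
  obtain ⟨c, hc, hb⟩ := quad_bound hn A hneg
  have hcont : Continuous (quadFun A) := by unfold quadFun; fun_prop
  induction g using MvPolynomial.induction_on' with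
  | add p q hp hq =>
    simp only [map_add, add_mul]
    exact hp.add hq
  | monomial m a =>
    have h1 : Integrable (fun x : Fin n → ℝ => ∏ i, (x i ^ (m i) * Real.exp (-c * x i ^ 2))) := by
      refine Integrable.fintype_prod (f := fun i (t : ℝ) => t ^ (m i) * Real.exp (-c * t ^ 2))
        fun i => ?_
      simpa using integrable_rpow_mul_exp_neg_mul_sq hc (s := (m i : ℝ))
        (by have : (0 : ℝ) ≤ m i := Nat.cast_nonneg _
            linarith)
    refine (h1.const_mul a).mono ?_ (Filter.Eventually.of_forall fun x => ?_)
    · exact ((MvPolynomial.continuous_eval _).mul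
        (Real.continuous_exp.comp hcont)).aestronglyMeasurable
    · rw [Finset.prod_mul_distrib, ← Real.exp_sum, ← Finset.mul_sum, eval_monomial,
        Finsupp.prod_fintype _ _ (by simp), mul_assoc, norm_mul, norm_mul, norm_mul, norm_mul]
      gcongr
      simpa using hb x

lemma poly_line {n : ℕ} (g : MvPolynomial (Fin n) ℝ) (x v : Fin n → ℝ) :
    HasLineDerivAt ℝ (fun x => eval x g) (∑ a, v a * eval x (pderiv a g)) x v := by
  unfold HasLineDerivAt
  induction g using MvPolynomial.induction_on with
  | C a => simpa using hasDerivAt_const (0 : ℝ) a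
  | add p q hp hq =>
    simpa [mul_add, Finset.sum_add_distrib] using hp.fun_add hq
  | mul_X p i hp =>
    have h : HasDerivAt (fun t : ℝ => x i + t * v i) (v i) 0 := by
      simpa using ((hasDerivAt_id (0 : ℝ)).mul_const (v i)).const_add (x i)
    have := hp.fun_mul h
    simp only [map_mul, eval_X, Pi.add_apply, Pi.smul_apply, smul_eq_mul]
    refine this.congr_deriv ?_
    simp only [pderiv_mul, pderiv_X, map_add, map_mul, eval_X, mul_add, Finset.sum_add_distrib,
      zero_smul, zero_mul, add_zero]
    congr 1
    · rw [Finset.sum_mul]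
      exact Finset.sum_congr rfl fun a _ => by ring
    · rw [Finset.sum_eq_single i]
      · simp [mul_comm]
      · intro b _ hbi
        simp [Pi.single_apply, hbi, hbi.symm]
      · simp

lemma quad_line {n : ℕ} (A : Matrix (Fin n) (Fin n) ℝ) (hA : A.IsSymm) (x v : Fin n → ℝ) :
    HasLineDerivAt ℝ (quadFun A) (∑ j, (∑ i, v i * A i j) * x j) x v := by
  unfold HasLineDerivAt quadFun
  have h : ∀ i, HasDerivAt (fun t : ℝ => x i + t * v i) (v i) 0 := fun i => by
    simpa using ((hasDerivAt_id (0 : ℝ)).mul_const (v i)).const_add (x i)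
  have := (HasDerivAt.fun_sum (u := Finset.univ) fun i _ =>
    HasDerivAt.fun_sum (u := Finset.univ) fun j _ =>
      ((h i).const_mul (A i j)).fun_mul (h j)).div_const 2
  simp only [Pi.add_apply, Pi.smul_apply, smul_eq_mul]
  refine this.congr_deriv ?_
  simp only [zero_mul, add_zero, Finset.sum_add_distrib]
  have e1 : ∑ i, ∑ j, A i j * v i * x j = ∑ j, (∑ i, v i * A i j) * x j := by
    rw [Finset.sum_comm]
    refine Finset.sum_congr rfl fun j _ => ?_
    rw [Finset.sum_mul]
    exact Finset.sum_congr rfl fun i _ => by ring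
  have e2 : ∑ i, ∑ j, A i j * x i * v j = ∑ j, (∑ i, v i * A i j) * x j := by
    refine Finset.sum_congr rfl fun j _ => ?_
    rw [Finset.sum_mul]
    exact Finset.sum_congr rfl fun i _ => by rw [hA.apply]; ring
  rw [e1, e2]
  ring

/-- Let `A` be a real symmetric negative definite (hence
invertible) `n×n` matrix and `f(x) = ½xᵗAx`.  For every polynomial
`g ∈ ℝ[x_1,…,x_n]` and every index `k`,
`∫ x_k·g·e^f dx = −Σ_a (A⁻¹)_{ka} ∫ (∂g/∂x_a)·e^f dx`. -/
theorem gaussian_momentum_identity {n : ℕ} (hn : 0 < n)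
    (A : Matrix (Fin n) (Fin n) ℝ) (hA : A.IsSymm) (hneg : (-A).PosDef)
    (g : MvPolynomial (Fin n) ℝ) (k : Fin n) :
    ∫ x : Fin n → ℝ, x k * eval x g * Real.exp (quadFun A x) =
      -∑ a, A⁻¹ k a * ∫ x : Fin n → ℝ,
        eval x (pderiv a g) * Real.exp (quadFun A x) := by
  have hu : IsUnit A.det := by
    have := hneg.isUnit
    rw [IsUnit.neg_iff] at this
    exact (Matrix.isUnit_iff_isUnit_det A).1 this
  have hq : ∀ x : Fin n → ℝ, HasLineDerivAt ℝ (fun x => Real.exp (quadFun A x))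
      (x k * Real.exp (quadFun A x)) x (A⁻¹ k) := by
    intro x
    have h := quad_line A hA x (A⁻¹ k)
    have e : ∑ j, (∑ i, A⁻¹ k i * A i j) * x j = x k := by
      simp only [← Matrix.mul_apply, Matrix.nonsing_inv_mul A hu, Matrix.one_apply]
      simp
    rw [e] at h
    unfold HasLineDerivAt at h ⊢
    simpa [mul_comm] using h.exp
  have key := integral_bilinear_hasLineDerivAt_right_eq_neg_left_of_integrable
    (μ := (volume : Measure (Fin n → ℝ))) (B := ContinuousLinearMap.mul ℝ ℝ)
    (f := fun x => eval x g) (f' := fun x => ∑ a, A⁻¹ k a * eval x (pderiv a g))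
    (g := fun x => Real.exp (quadFun A x)) (g' := fun x => x k * Real.exp (quadFun A x))
    (v := A⁻¹ k) ?_ ?_ ?_ (fun x _ => poly_line g x _) (fun x _ => hq x)
  · simp only [ContinuousLinearMap.mul_apply', Finset.sum_mul, mul_assoc] at key
    rw [integral_finsetSum _ fun a _ => (poly_int hn A hneg _).const_mul _] at key
    simp only [integral_const_mul] at key
    rw [← key]
    congr 1
    ext x
    ring
  · refine (poly_int hn A hneg (∑ a, C (A⁻¹ k a) * pderiv a g)).congr
      (Filter.Eventually.of_forall fun x => ?_)
    simp only [ContinuousLinearMap.mul_apply']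
    simp only [map_sum, map_mul, eval_C]
  · refine (poly_int hn A hneg (g * X k)).congr (Filter.Eventually.of_forall fun x => ?_)
    simp only [ContinuousLinearMap.mul_apply', map_mul, eval_X, mul_assoc]
  · exact poly_int hn A hneg g

end
end
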